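/- arXiv:1512.03946 — 2 statements merged into one kernel-verified Lean document; each statement's English description precedes it below -/
import Mathlib

section
/- (Negative energy density in one-particle states of the Ising model.) Let μ > 0 and let F_P(θ) = cosh(θ/2) (the Ising model with P ≡ 1). Then there exist a smooth compactly supported function φ : ℝ → ℂ and a real-valued Schwartz function g on ℝ such that Q(φ) < 0. -/
/-!
Write `C = cosh (·/2)` and `S = sinh (·/2)`. Since `cosh ((θ+η)/2) = C(θ)C(η) + S(θ)S(η)` and
`cosh ((θ-η)/2) = C(θ)C(η) - S(θ)S(η)`, the kernel without the factor `G` has rank four: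
`cosh² ((θ+η)/2) cosh ((θ-η)/2) = C³⊗C³ + C²S⊗C²S - CS²⊗CS² - S³⊗S³`.
On a real test function `f` the corresponding quadratic form (`kernel_form`) is therefore
`(∫ f C³)² + (∫ f C²S)² - (∫ f CS²)² - (∫ f S³)²`. It is negative when `f` is even (so that the
second term vanishes), `∫ f C³ = 0` and `∫ f CS² ≠ 0`. Such an `f` is `χ · (m - C²)` for an even
bump function `χ` and the appropriate constant `m` (`exists_test_function`).

It remains to bring `G` in. For `g_s(t) = g(t/s)` one has `G_s(k) = s · G(s k)`
(`fourierG_scale`), and as `s → 0` the form with kernel factor `G(s k)` tends to `G(0) = ∫ g² > 0`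
times the form above, by dominated convergence. Hence `Q < 0` for small `s > 0`.
-/

open MeasureTheory

/-- Fourier transform of `g²`: `G(k) = ∫ g(t)² e^{ikt} dt`. -/
noncomputable def fourierG (g : ℝ → ℝ) (k : ℝ) : ℂ :=
  ∫ t : ℝ, ((g t : ℂ))^2 * Complex.exp (Complex.I * (k : ℂ) * (t : ℂ))

/-- One-particle energy density quadratic form
`Q(φ) = (μ²/(2π)) ∫∫ cosh²((θ+η)/2) F_P(θ−η) G(ω(θ)−ω(η)) conj(φ(θ)) φ(η) dθ dη`. -/
noncomputable def Qform (μ : ℝ) (FP : ℝ → ℝ) (g : ℝ → ℝ) (φ : ℝ → ℂ) : ℂ :=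
  ((μ ^ 2 / (2 * Real.pi) : ℝ) : ℂ) *
    ∫ θ : ℝ, ∫ η : ℝ,
      (((Real.cosh ((θ + η) / 2)) ^ 2 * FP (θ - η) : ℝ) : ℂ) *
        fourierG g (μ * Real.cosh θ - μ * Real.cosh η) *
        (starRingEnd ℂ) (φ θ) * φ η

section
open Real

lemma kernel_rank_four (x y : ℝ) :
    cosh ((x + y) / 2) ^ 2 * cosh ((x - y) / 2) =
      cosh (x / 2) ^ 3 * cosh (y / 2) ^ 3
        + (cosh (x / 2) ^ 2 * sinh (x / 2)) * (cosh (y / 2) ^ 2 * sinh (y / 2))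
        - (cosh (x / 2) * sinh (x / 2) ^ 2) * (cosh (y / 2) * sinh (y / 2) ^ 2)
        - sinh (x / 2) ^ 3 * sinh (y / 2) ^ 3 := by
  rw [add_div, sub_div, cosh_add, cosh_sub]
  ring

lemma integrable_mul_of_compact {f w : ℝ → ℝ} (hf : Continuous f) (hc : HasCompactSupport f)
    (hw : Continuous w) : Integrable (fun x => f x * w x) :=
  (hf.mul hw).integrable_of_hasCompactSupport hc.mul_right

/-- The form with `G` replaced by `1`, evaluated through the rank four decomposition. -/
lemma kernel_form {f : ℝ → ℝ} (hf : Continuous f) (hc : HasCompactSupport f) :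
    ∫ p : ℝ × ℝ, cosh ((p.1 + p.2) / 2) ^ 2 * cosh ((p.1 - p.2) / 2) * f p.1 * f p.2 =
      (∫ x, f x * cosh (x / 2) ^ 3) ^ 2 + (∫ x, f x * (cosh (x / 2) ^ 2 * sinh (x / 2))) ^ 2
        - (∫ x, f x * (cosh (x / 2) * sinh (x / 2) ^ 2)) ^ 2
        - (∫ x, f x * sinh (x / 2) ^ 3) ^ 2 := by
  have key : ∀ w : ℝ → ℝ, Continuous w →
      Integrable (fun p : ℝ × ℝ => (f p.1 * w p.1) * (f p.2 * w p.2)) := fun w hw =>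
    (integrable_mul_of_compact hf hc hw).mul_prod (integrable_mul_of_compact hf hc hw)
  have sq : ∀ w : ℝ → ℝ, ∫ p : ℝ × ℝ, (f p.1 * w p.1) * (f p.2 * w p.2)
      = (∫ x, f x * w x) ^ 2 := fun w => by
    rw [pow_two]
    exact integral_prod_mul (fun x => f x * w x) (fun x => f x * w x)
  have k1 := key (fun x => cosh (x / 2) ^ 3) (by fun_prop)
  have k2 := key (fun x => cosh (x / 2) ^ 2 * sinh (x / 2)) (by fun_prop)
  have k3 := key (fun x => cosh (x / 2) * sinh (x / 2) ^ 2) (by fun_prop)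
  have k4 := key (fun x => sinh (x / 2) ^ 3) (by fun_prop)
  rw [← sq, ← sq, ← sq, ← sq, ← integral_add' k1 k2, ← integral_sub' (k1.add k2) k3,
    ← integral_sub' ((k1.add k2).sub k3) k4]
  congr 1
  ext p
  rw [kernel_rank_four]
  simp only [Pi.add_apply, Pi.sub_apply]
  ring

lemma exists_even_bump : ∃ χ : ℝ → ℝ, ContDiff ℝ (⊤ : ℕ∞) χ ∧ HasCompactSupport χ ∧
    (∀ x, 0 ≤ χ x) ∧ (∀ x, χ (-x) = χ x) ∧ χ 0 = 1 ∧ χ 1 = 1 := by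
  let χ : ContDiffBump (0 : ℝ) := ⟨1, 2, one_pos, one_lt_two⟩
  exact ⟨χ, χ.contDiff, χ.hasCompactSupport, fun x => χ.nonneg, χ.neg,
    χ.one_of_mem_closedBall (by simp [χ]), χ.one_of_mem_closedBall (by simp [χ])⟩

/-- The test function is `χ · (m - C²)` with `C = cosh (·/2)` and `m = ∫ χ C⁵ / ∫ χ C³`, which makes
`∫ f C³ = 0`. Then `∫ f C S² = - ∫ f C`, while `m ∫ f C = ∫ χ C (m - C²)² > 0`. -/
lemma exists_test_function : ∃ f : ℝ → ℝ, ContDiff ℝ (⊤ : ℕ∞) f ∧ HasCompactSupport f ∧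
    (∀ x, f (-x) = f x) ∧ ∫ x, f x * cosh (x / 2) ^ 3 = 0 ∧
    ∫ x, f x * (cosh (x / 2) * sinh (x / 2) ^ 2) ≠ 0 := by
  obtain ⟨χ, χd, χs, χn, χe, χ0, χ1⟩ := exists_even_bump
  have χc : Continuous χ := χd.continuous
  have int : ∀ w : ℝ → ℝ, Continuous w → Integrable (fun x => χ x * w x) := fun w hw =>
    integrable_mul_of_compact χc χs hw
  have Apos : 0 < ∫ x, χ x * cosh (x / 2) ^ 3 := by
    refine Continuous.integral_pos_of_hasCompactSupport_nonneg_nonzero (x := 0)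
      (by fun_prop) χs.mul_right (fun x => ?_) (by simp [χ0])
    have := χn x
    have := cosh_pos (x / 2)
    positivity
  obtain ⟨m, hm⟩ : ∃ m : ℝ,
      m * (∫ x, χ x * cosh (x / 2) ^ 3) = ∫ x, χ x * cosh (x / 2) ^ 5 :=
    ⟨_, div_mul_cancel₀ _ Apos.ne'⟩
  have h3 : ∫ x, χ x * (m - cosh (x / 2) ^ 2) * cosh (x / 2) ^ 3 = 0 := by
    have : ∀ x, χ x * (m - cosh (x / 2) ^ 2) * cosh (x / 2) ^ 3
        = m * (χ x * cosh (x / 2) ^ 3) - χ x * cosh (x / 2) ^ 5 := fun x => by ring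
    simp_rw [this]
    rw [integral_sub ((int _ (by fun_prop)).const_mul m) (int _ (by fun_prop)),
      integral_const_mul]
    linarith
  have hpos : 0 < ∫ x, χ x * (cosh (x / 2) * (m - cosh (x / 2) ^ 2) ^ 2) := by
    -- `C²` takes different values at `0` and `1`, so it differs from `m` at one of them.
    have hx : ∃ x : ℝ, χ x = 1 ∧ m - cosh (x / 2) ^ 2 ≠ 0 := by
      by_contra! h
      have h0 := h 0 χ0
      have h1 := h 1 χ1
      have : 1 < cosh ((1 : ℝ) / 2) := one_lt_cosh.2 (by norm_num)
      simp only [zero_div, cosh_zero] at h0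
      nlinarith
    obtain ⟨x, hx1, hx2⟩ := hx
    refine Continuous.integral_pos_of_hasCompactSupport_nonneg_nonzero (x := x)
      (by fun_prop) χs.mul_right (fun x => ?_) ?_
    · have := χn x
      have := cosh_pos (x / 2)
      positivity
    · have := cosh_pos (x / 2)
      rw [hx1]
      positivity
  have hd : ContDiff ℝ (⊤ : ℕ∞) (fun x : ℝ => χ x * (m - cosh (x / 2) ^ 2)) := by
    have h2 : ContDiff ℝ (⊤ : ℕ∞) (fun x : ℝ => cosh (x / 2)) :=
      Real.contDiff_cosh.comp (contDiff_id.div_const 2)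
    exact χd.mul (contDiff_const.sub (h2.pow 2))
  have hs : HasCompactSupport (fun x : ℝ => χ x * (m - cosh (x / 2) ^ 2)) := χs.mul_right
  have he : ∀ x : ℝ, χ (-x) * (m - cosh (-x / 2) ^ 2) = χ x * (m - cosh (x / 2) ^ 2) :=
    fun x => by simp only [χe, neg_div, cosh_neg]
  refine ⟨fun x => χ x * (m - cosh (x / 2) ^ 2), hd, hs, he, h3, fun h => ?_⟩
  -- `χ C (m - C²)² = f C (m - C²) = (m - 1) f C³ - m f C S²`, because `S² = C² - 1`.
  · have : ∀ x, χ x * (cosh (x / 2) * (m - cosh (x / 2) ^ 2) ^ 2)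
        = (m - 1) * (χ x * (m - cosh (x / 2) ^ 2) * cosh (x / 2) ^ 3)
          - m * (χ x * (m - cosh (x / 2) ^ 2) * (cosh (x / 2) * sinh (x / 2) ^ 2)) := fun x => by
      rw [sinh_sq]; ring
    simp_rw [this] at hpos
    rw [integral_sub, integral_const_mul, integral_const_mul, h3, h] at hpos
    · simp at hpos
    · have := (int (fun x => (m - cosh (x / 2) ^ 2) * cosh (x / 2) ^ 3) (by fun_prop)).const_mul
        (m - 1)
      simpa only [mul_assoc] using this
    · have := (int (fun x => (m - cosh (x / 2) ^ 2) * (cosh (x / 2) * sinh (x / 2) ^ 2))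
        (by fun_prop)).const_mul m
      simpa only [mul_assoc] using this

/-- A test function on which the form without the factor `G` is negative. -/
lemma exists_kernel_form_neg : ∃ f : ℝ → ℝ, ContDiff ℝ (⊤ : ℕ∞) f ∧ HasCompactSupport f ∧
    ∫ p : ℝ × ℝ, cosh ((p.1 + p.2) / 2) ^ 2 * cosh ((p.1 - p.2) / 2) * f p.1 * f p.2 < 0 := by
  obtain ⟨f, hf, hc, hev, h3, h1⟩ := exists_test_function
  refine ⟨f, hf, hc, ?_⟩
  have hodd : ∫ x, f x * (cosh (x / 2) ^ 2 * sinh (x / 2)) = 0 := by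
    have := integral_neg_eq_self (fun x => f x * (cosh (x / 2) ^ 2 * sinh (x / 2))) volume
    simp only [hev, neg_div, cosh_neg, sinh_neg, mul_neg, integral_neg] at this
    linarith
  rw [kernel_form hf.continuous hc, h3, hodd]
  have := sq_nonneg (∫ x, f x * sinh (x / 2) ^ 3)
  have := sq_pos_of_ne_zero h1
  linarith

end

lemma norm_fourier_kernel (k t : ℝ) : ‖Complex.exp (Complex.I * (k : ℂ) * (t : ℂ))‖ = 1 := by
  have : Complex.I * (k : ℂ) * (t : ℂ) = ((k * t : ℝ) : ℂ) * Complex.I := by push_cast; ring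
  rw [this, Complex.norm_exp_ofReal_mul_I]

lemma norm_fourierG_le (g : ℝ → ℝ) (k : ℝ) : ‖fourierG g k‖ ≤ ∫ t, g t ^ 2 := by
  refine (norm_integral_le_integral_norm _).trans_eq ?_
  simp [norm_fourier_kernel]

lemma fourierG_zero (g : ℝ → ℝ) : fourierG g 0 = ((∫ t, g t ^ 2 : ℝ) : ℂ) := by
  rw [← integral_complex_ofReal]
  simp [fourierG]

lemma continuous_fourierG {g : ℝ → ℝ} (hg : Continuous g) (hc : HasCompactSupport g) :
    Continuous (fourierG g) := by
  have hi : Integrable (fun t => g t ^ 2) :=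
    (hg.pow 2).integrable_of_hasCompactSupport
      (by simpa only [pow_two] using hc.mul_right (f' := g))
  refine continuous_of_dominated (bound := fun t => g t ^ 2) (fun k => ?_) (fun k => ?_) hi ?_
  · exact Continuous.aestronglyMeasurable (by fun_prop)
  · exact Filter.Eventually.of_forall fun t => by simp [norm_fourier_kernel]
  · exact Filter.Eventually.of_forall fun t => by fun_prop

lemma fourierG_scale (g : ℝ → ℝ) {s : ℝ} (hs : 0 < s) (k : ℝ) :
    fourierG (fun t => g (s⁻¹ * t)) k = (s : ℂ) * fourierG g (s * k) := by
  have := Measure.integral_comp_mul_left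
    (fun t : ℝ => ((g t : ℂ)) ^ 2 * Complex.exp (Complex.I * ((s * k : ℝ) : ℂ) * (t : ℂ))) s⁻¹
  rw [inv_inv, abs_of_pos hs, Complex.real_smul] at this
  unfold fourierG
  rw [← this]
  congr 1
  ext t
  have hs' : (s : ℂ) ≠ 0 := by exact_mod_cast hs.ne'
  congr 2
  push_cast
  field_simp

/-- Negative energy density in one-particle states of the Ising model
(`F_P(θ) = cosh(θ/2)`): there exist a smooth compactly supported `φ` and a real
Schwartz `g` with `Q(φ) < 0`. -/
theorem ising_exists_negative_energy_density
    (μ : ℝ) (hμ : 0 < μ) :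
    ∃ (φ : ℝ → ℂ) (g : SchwartzMap ℝ ℝ),
      ContDiff ℝ (⊤ : ℕ∞) φ ∧ HasCompactSupport φ ∧
        (Qform μ (fun θ : ℝ => Real.cosh (θ / 2)) (⇑g) φ).re < 0 := by
  obtain ⟨f, hf, hc, hneg⟩ := exists_kernel_form_neg
  obtain ⟨χ, χd, χs, χn, χe, χ0, χ1⟩ := exists_even_bump
  have χc : Continuous χ := χd.continuous
  have hGc : Continuous (fourierG χ) := continuous_fourierG χc χs
  have hM : 0 < ∫ t, χ t ^ 2 := by
    refine Continuous.integral_pos_of_hasCompactSupport_nonneg_nonzero (x := 0)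
      (by fun_prop) (χs.comp_left (g := fun y : ℝ => y ^ 2) (by simp))
      (fun x => sq_nonneg _) ?_
    rw [χ0]
    norm_num
  set M := ∫ t, χ t ^ 2 with hMdef
  -- `h` is the integrand without `G`; `J s` is the form with kernel factor `G (s k)`.
  let h : ℝ × ℝ → ℝ := fun p =>
    Real.cosh ((p.1 + p.2) / 2) ^ 2 * Real.cosh ((p.1 - p.2) / 2) * f p.1 * f p.2
  have fc := hf.continuous
  have hcont : Continuous h := by fun_prop
  have h_integrable : Integrable h := by
    refine hcont.integrable_of_hasCompactSupport ?_
    refine HasCompactSupport.intro (hc.prod hc) fun p hp => ?_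
    by_cases h1 : p.1 ∈ tsupport f
    · have h2 : p.2 ∉ tsupport f := fun h2 => hp ⟨h1, h2⟩
      simp [h, image_eq_zero_of_notMem_tsupport h2]
    · simp [h, image_eq_zero_of_notMem_tsupport h1]
  let F : ℝ → ℝ × ℝ → ℂ := fun s p =>
    (h p : ℂ) * fourierG χ (s * (μ * Real.cosh p.1 - μ * Real.cosh p.2))
  have Fcont : ∀ s, Continuous (F s) := fun s => by fun_prop
  have Fbound : ∀ s p, ‖F s p‖ ≤ ‖h p‖ * M := fun s p => by
    rw [norm_mul, Complex.norm_real]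
    exact mul_le_mul_of_nonneg_left (norm_fourierG_le _ _) (norm_nonneg _)
  have Fint : ∀ s, Integrable (F s) := fun s =>
    (h_integrable.norm.mul_const M).mono' (Fcont s).aestronglyMeasurable
      (Filter.Eventually.of_forall (Fbound s))
  have Jcont : Continuous fun s => ∫ p, F s p := by
    refine continuous_of_dominated (bound := fun p => ‖h p‖ * M)
      (fun s => (Fcont s).aestronglyMeasurable)
      (fun s => Filter.Eventually.of_forall (Fbound s)) (h_integrable.norm.mul_const M)
      (Filter.Eventually.of_forall fun p => by fun_prop)
  have J0 : (∫ p, F 0 p).re < 0 := by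
    have : ∀ p, F 0 p = ((h p * M : ℝ) : ℂ) := fun p => by
      simp only [F, zero_mul, fourierG_zero]
      push_cast
      rfl
    simp_rw [this]
    rw [integral_complex_ofReal, Complex.ofReal_re, integral_mul_const]
    exact mul_neg_of_neg_of_pos hneg hM
  obtain ⟨s, hs, hspos⟩ : ∃ s : ℝ, (∫ p, F s p).re < 0 ∧ 0 < s := by
    have hev : ∀ᶠ s in nhdsWithin (0 : ℝ) (Set.Ioi 0), (∫ p, F s p).re < 0 :=
      nhdsWithin_le_nhds
        ((Complex.continuous_re.comp Jcont).continuousAt.eventually_lt continuousAt_const J0)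
    exact (hev.and self_mem_nhdsWithin).exists
  have gc : HasCompactSupport fun t : ℝ => χ (s⁻¹ * t) :=
    χs.comp_homeomorph (Homeomorph.mulLeft₀ s⁻¹ (inv_ne_zero hspos.ne'))
  have gd : ContDiff ℝ ((⊤ : ℕ∞) : WithTop ℕ∞) fun t : ℝ => χ (s⁻¹ * t) :=
    χd.comp (contDiff_const.mul contDiff_id)
  refine ⟨fun x => (f x : ℂ), gc.toSchwartzMap gd, Complex.ofRealCLM.contDiff.comp hf,
    hc.comp_left (g := Complex.ofReal) Complex.ofReal_zero, ?_⟩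
  have hQ : Qform μ (fun θ : ℝ => Real.cosh (θ / 2)) (fun t : ℝ => χ (s⁻¹ * t))
      (fun x => (f x : ℂ)) = ((μ ^ 2 / (2 * Real.pi) * s : ℝ) : ℂ) * ∫ p, F s p := by
    unfold Qform
    rw [Measure.volume_eq_prod, integral_prod _ (by rw [← Measure.volume_eq_prod]; exact Fint s)]
    rw [Complex.ofReal_mul, mul_assoc]
    congr 1
    rw [← integral_const_mul]
    refine integral_congr_ae (Filter.Eventually.of_forall fun x => ?_)
    dsimp only
    rw [← integral_const_mul]
    refine integral_congr_ae (Filter.Eventually.of_forall fun y => ?_)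
    dsimp only
    rw [fourierG_scale _ hspos]
    simp only [F, h, Complex.conj_ofReal]
    push_cast
    ring
  have hcoe : ⇑(gc.toSchwartzMap gd) = fun t : ℝ => χ (s⁻¹ * t) := rfl
  rw [hcoe, hQ, Complex.re_ofReal_mul]
  exact mul_neg_of_pos_of_neg (by positivity) hs
end

section
/- (QEI for the free field with the admissible one-parameter family of stress tensors.) Let μ > 0, let α ∈ ℝ with |α| < 1/2, and set F_P(θ) = (1−α) + α·cosh θ (corresponding to the polynomial P(x) = (1−α) + αx with P(1) = 1 in the free Bose field, where F_min ≡ 1). Then for every real-valued Schwartz function g on ℝ there exists a constant c_g > 0 such that for all smooth compactly supported φ : ℝ → ℂ one has Q(φ) ≥ −c_g·‖φ‖². -/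
/-!
Write `c, s` for `cosh θ, sinh θ` and `c', s'` for `cosh η, sinh η`. Hyperbolic identities give

  `2 cosh²((θ+η)/2) ((1-α) + α cosh (θ-η))
      = (1-2α) + (1+2α) c c' + (1-2α) s s' + α (c-c')²`.

Since `G` is the Fourier transform of the nonnegative function `g²`, the kernel `G(ω(θ)-ω(η))` is
positive semidefinite (`fourierG_posSemidef`). As `|α| < 1/2`, the first three terms therefore
contribute nonnegatively to `Q(φ)`: they are the form of this kernel evaluated at `φ`, `cosh · φ`
and `sinh · φ`, with nonnegative coefficients.

The remaining kernel `(c-c')² G(μ(c-c'))` defines a bounded operator on `L²`: `G` is rapidly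
decreasing, so the kernel is `O(1/(1+|c-c'|))`, and `|c-c'| ≥ (|θ|-|η|)²/2`. Hence it is dominated
by a multiple of `1/(1+(θ-η)²) + 1/(1+(θ+η)²)` (`errorKernel_bound`), whose integral over either
variable is `2π`, and a Schur-type estimate (`schur_bound`) concludes.
-/

open MeasureTheory

open scoped SchwartzMap FourierTransform

/-! ### The Fourier transform of `g²` -/

lemma exists_schwartz_sq (g : 𝓢(ℝ, ℝ)) :
    ∃ S : 𝓢(ℝ, ℂ), ∀ t, S t = (g t : ℂ) ^ 2 := by
  refine ⟨(SchwartzMap.smulLeftCLM ℝ (⇑g) g).postcompCLM Complex.ofRealCLM, fun t => ?_⟩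
  rw [SchwartzMap.postcompCLM_apply, SchwartzMap.smulLeftCLM_apply_apply g.hasTemperateGrowth]
  simp [pow_two]

/-- In Mathlib's normalisation, `G(k)` is the Fourier transform of `g²` at `-k/(2π)`. -/
lemma fourierG_eq (g : 𝓢(ℝ, ℝ)) (S : 𝓢(ℝ, ℂ)) (hS : ∀ t, S t = (g t : ℂ) ^ 2) (k : ℝ) :
    fourierG g k = (𝓕 S) (-(k / (2 * Real.pi))) := by
  rw [SchwartzMap.fourier_coe, Real.fourier_real_eq_integral_exp_smul]
  unfold fourierG
  refine integral_congr_ae (Filter.Eventually.of_forall fun t => ?_)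
  have hpi : (Real.pi : ℂ) ≠ 0 := by exact_mod_cast Real.pi_ne_zero
  simp only [hS, smul_eq_mul]
  rw [mul_comm]
  congr 2
  push_cast
  field_simp

lemma fourierG_continuous (g : 𝓢(ℝ, ℝ)) : Continuous (fourierG g) := by
  obtain ⟨S, hS⟩ := exists_schwartz_sq g
  have : fourierG g = fun k => (𝓕 S) (-(k / (2 * Real.pi))) := funext (fourierG_eq g S hS)
  rw [this]
  exact (𝓕 S).continuous.comp (by fun_prop)

lemma fourierG_decay (g : 𝓢(ℝ, ℝ)) (n : ℕ) :
    ∃ C : ℝ, ∀ k : ℝ, |k| ^ n * ‖fourierG g k‖ ≤ C := by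
  obtain ⟨S, hS⟩ := exists_schwartz_sq g
  obtain ⟨C, -, hC⟩ := (𝓕 S).decay n 0
  refine ⟨(2 * Real.pi) ^ n * C, fun k => ?_⟩
  have h := hC (-(k / (2 * Real.pi)))
  have hpi : 0 < 2 * Real.pi := by positivity
  rw [norm_iteratedFDeriv_zero, ← fourierG_eq g S hS, norm_neg, Real.norm_eq_abs, abs_div,
    abs_of_pos hpi, div_pow] at h
  calc |k| ^ n * ‖fourierG g k‖
      = (2 * Real.pi) ^ n * (|k| ^ n / (2 * Real.pi) ^ n * ‖fourierG g k‖) := by field_simp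
    _ ≤ _ := by gcongr

/-! ### Integrability of the kernels and positivity -/

lemma kernel_integrable {K : ℝ × ℝ → ℂ} (hK : Continuous K) {f : ℝ → ℂ}
    (hf : Continuous f) (hfc : HasCompactSupport f) :
    Integrable (fun p : ℝ × ℝ => K p * (starRingEnd ℂ) (f p.1) * f p.2)
      (volume.prod volume) := by
  refine Continuous.integrable_of_hasCompactSupport ?_ ?_
  · have := Complex.continuous_conj
    fun_prop
  · refine HasCompactSupport.intro (hfc.isCompact.prod hfc.isCompact) ?_
    rintro ⟨x, y⟩ hxy
    by_cases hx : x ∈ tsupport f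
    · have hy : y ∉ tsupport f := fun hy => hxy ⟨hx, hy⟩
      simp [image_eq_zero_of_notMem_tsupport hy]
    · simp [image_eq_zero_of_notMem_tsupport hx]

/-- The kernel `G(w(θ)-w(η))` is positive semidefinite: by Fubini, its quadratic form at `f` is
`∫ g(t)² |∫ e^{i w(θ) t} conj(f(θ)) dθ|² dt`. -/
lemma fourierG_posSemidef (g : 𝓢(ℝ, ℝ)) {w : ℝ → ℝ} (hw : Continuous w) {f : ℝ → ℂ}
    (hf : Continuous f) (hfc : HasCompactSupport f) :
    0 ≤ (∫ p : ℝ × ℝ, fourierG g (w p.1 - w p.2) * (starRingEnd ℂ) (f p.1) * f p.2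
      ∂(volume.prod volume)).re := by
  have hconj := Complex.continuous_conj
  have hfi : Integrable f := hf.integrable_of_hasCompactSupport hfc
  obtain ⟨S, hS⟩ := exists_schwartz_sq g
  have hSi : Integrable (fun t => S t) := S.integrable
  set u : ℝ → ℝ → ℂ := fun t x => Complex.exp (Complex.I * (w x : ℂ) * t) * (starRingEnd ℂ) (f x)
    with hu
  set F : ℝ × ℝ → ℝ → ℂ := fun p t => S t * (u t p.1 * (starRingEnd ℂ) (u t p.2)) with hF
  have hconjexp : ∀ t x : ℝ, (starRingEnd ℂ) (Complex.exp (Complex.I * (w x : ℂ) * t))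
      = Complex.exp (-(Complex.I * (w x : ℂ) * t)) := fun t x => by
    rw [← Complex.exp_conj]; simp
  have h1 : ∀ p : ℝ × ℝ, fourierG g (w p.1 - w p.2) * (starRingEnd ℂ) (f p.1) * f p.2
      = ∫ t, F p t := by
    intro p
    unfold fourierG
    rw [← integral_mul_const, ← integral_mul_const]
    refine integral_congr_ae (Filter.Eventually.of_forall fun t => ?_)
    simp only [hF, hu, map_mul, hconjexp, hS, Complex.conj_conj]
    have : Complex.exp (Complex.I * ((w p.1 - w p.2 : ℝ) : ℂ) * t)
        = Complex.exp (Complex.I * (w p.1 : ℂ) * t)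
          * Complex.exp (-(Complex.I * (w p.2 : ℂ) * t)) := by
      rw [← Complex.exp_add]; congr 1; push_cast; ring
    rw [this]; ring
  have hnorm : ∀ t x, ‖u t x‖ = ‖f x‖ := by
    intro t x
    simp only [hu, norm_mul, RCLike.norm_conj]
    have : Complex.I * (w x : ℂ) * t = ((w x * t : ℝ) : ℂ) * Complex.I := by push_cast; ring
    rw [this, Complex.norm_exp_ofReal_mul_I, one_mul]
  have hFi : Integrable (Function.uncurry F) ((volume.prod volume).prod volume) := by
    have hdom : Integrable (fun z : (ℝ × ℝ) × ℝ => (f z.1.1 * f z.1.2) * S z.2)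
        ((volume.prod volume).prod volume) := (hfi.mul_prod hfi).mul_prod hSi
    refine hdom.mono ?_ (Filter.Eventually.of_forall fun z => le_of_eq ?_)
    · have hSc := S.continuous
      refine Continuous.aestronglyMeasurable ?_
      simp only [hF, hu, Function.uncurry_def]
      fun_prop
    · simp only [hF, Function.uncurry_def, norm_mul, RCLike.norm_conj, hnorm]
      ring
  simp_rw [h1]
  rw [integral_integral_swap hFi]
  have h2 : ∀ t, (∫ p : ℝ × ℝ, F p t ∂(volume.prod volume))
      = ((g t ^ 2 * ‖∫ x, u t x‖ ^ 2 : ℝ) : ℂ) := by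
    intro t
    simp only [hF]
    rw [integral_const_mul, integral_prod_mul (u t) (fun y => (starRingEnd ℂ) (u t y)),
      integral_conj, Complex.mul_conj, Complex.normSq_eq_norm_sq, hS]
    push_cast; ring
  simp_rw [h2]
  rw [integral_complex_ofReal, Complex.ofReal_re]
  exact integral_nonneg fun t => by positivity

/-! ### The bounded error kernel -/

/-- The dominating kernel `1/(1+(θ-η)²) + 1/(1+(θ+η)²)`. -/
noncomputable def schurW (x y : ℝ) : ℝ := (1 + (x - y) ^ 2)⁻¹ + (1 + (x + y) ^ 2)⁻¹

lemma schurW_nonneg (x y : ℝ) : 0 ≤ schurW x y := by unfold schurW; positivity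

lemma schurW_comm (x y : ℝ) : schurW x y = schurW y x := by
  unfold schurW
  rw [add_comm x y, ← neg_sub x y, neg_sq]

lemma schurW_continuous : Continuous fun p : ℝ × ℝ => schurW p.1 p.2 := by
  unfold schurW
  refine Continuous.add (Continuous.inv₀ (by fun_prop) fun p => by positivity)
    (Continuous.inv₀ (by fun_prop) fun p => by positivity)

lemma schurW_integrable (x : ℝ) : Integrable (schurW x) := by
  unfold schurW
  exact (integrable_inv_one_add_sq.comp_sub_left x).add (integrable_inv_one_add_sq.comp_add_left x)

lemma schurW_integral (x : ℝ) : ∫ y, schurW x y = 2 * Real.pi := by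
  unfold schurW
  rw [integral_add (integrable_inv_one_add_sq.comp_sub_left x)
      (integrable_inv_one_add_sq.comp_add_left x),
    integral_sub_left_eq_self (fun y : ℝ => (1 + y ^ 2)⁻¹) volume x,
    integral_add_left_eq_self (fun y : ℝ => (1 + y ^ 2)⁻¹) x, integral_univ_inv_one_add_sq]
  ring

lemma schurW_weighted {n : ℝ → ℝ} (hn : Continuous n) (hni : Integrable n) (h0 : ∀ x, 0 ≤ n x) :
    Integrable (fun p : ℝ × ℝ => n p.1 * schurW p.1 p.2) (volume.prod volume) ∧
    ∫ p : ℝ × ℝ, n p.1 * schurW p.1 p.2 ∂(volume.prod volume) = 2 * Real.pi * ∫ x, n x := by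
  have hc := schurW_continuous
  have hI : Integrable (fun p : ℝ × ℝ => n p.1 * schurW p.1 p.2) (volume.prod volume) := by
    rw [integrable_prod_iff (Continuous.aestronglyMeasurable (by fun_prop))]
    refine ⟨Filter.Eventually.of_forall fun x => (schurW_integrable x).const_mul (n x), ?_⟩
    have : ∀ x, ∫ y, ‖n x * schurW x y‖ = n x * (2 * Real.pi) := fun x => by
      simp_rw [Real.norm_of_nonneg (mul_nonneg (h0 x) (schurW_nonneg x _))]
      rw [integral_const_mul, schurW_integral]
    simp only [this]
    exact hni.mul_const _
  refine ⟨hI, ?_⟩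
  rw [integral_prod _ hI]
  simp only [integral_const_mul, schurW_integral, integral_mul_const]
  ring

/-- Schur test for a kernel dominated by `B * schurW`, with
`|f(θ)| |f(η)| ≤ (|f(θ)|² + |f(η)|²)/2` in place of Cauchy–Schwarz. -/
lemma schur_bound {E : ℝ × ℝ → ℂ} {B : ℝ} (hB : 0 ≤ B)
    (hE : ∀ p : ℝ × ℝ, ‖E p‖ ≤ B * schurW p.1 p.2) {f : ℝ → ℂ}
    (hf : Continuous f) (hfc : HasCompactSupport f) :
    ‖∫ p : ℝ × ℝ, E p * (starRingEnd ℂ) (f p.1) * f p.2 ∂(volume.prod volume)‖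
      ≤ 2 * Real.pi * B * ∫ x, ‖f x‖ ^ 2 := by
  have hn : Continuous fun x => ‖f x‖ ^ 2 := by fun_prop
  have hnc : HasCompactSupport fun x => ‖f x‖ ^ 2 :=
    hfc.comp_left (g := fun z : ℂ => ‖z‖ ^ 2) (by simp)
  obtain ⟨hI, hv⟩ := schurW_weighted hn (hn.integrable_of_hasCompactSupport hnc)
    fun x => by positivity
  have hI' := hI.swap
  have hv' := integral_prod_swap (μ := volume) (ν := volume)
    (fun p : ℝ × ℝ => ‖f p.1‖ ^ 2 * schurW p.1 p.2)
  simp only [Function.comp_def, Prod.fst_swap, Prod.snd_swap] at hI' hv'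
  rw [hv] at hv'
  refine (norm_integral_le_of_norm_le ((hI.add hI').const_mul (B / 2))
    (Filter.Eventually.of_forall fun p => ?_)).trans (le_of_eq ?_)
  · simp only [norm_mul, RCLike.norm_conj, Pi.add_apply]
    rw [schurW_comm p.2 p.1]
    have h1 := mul_le_mul_of_nonneg_right (hE p)
      (mul_nonneg (norm_nonneg (f p.1)) (norm_nonneg (f p.2)))
    have h2 := mul_nonneg (mul_nonneg hB (schurW_nonneg p.1 p.2)) (sq_nonneg (‖f p.1‖ - ‖f p.2‖))
    nlinarith
  · simp only [Pi.add_apply]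
    rw [integral_const_mul, integral_add hI hI', hv, hv']
    ring

lemma cosh_sub_cosh_ge {x y : ℝ} (hy : 0 ≤ y) (hxy : y ≤ x) :
    (x - y) ^ 2 / 2 ≤ Real.cosh x - Real.cosh y := by
  have h1 : Real.cosh x - Real.cosh y = 2 * (Real.sinh ((x + y) / 2) * Real.sinh ((x - y) / 2)) := by
    have hp := Real.cosh_add ((x + y) / 2) ((x - y) / 2)
    have hm := Real.cosh_sub ((x + y) / 2) ((x - y) / 2)
    rw [show (x + y) / 2 + (x - y) / 2 = x by ring] at hp
    rw [show (x + y) / 2 - (x - y) / 2 = y by ring] at hm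
    rw [hp, hm]
    ring
  have h2 : (x - y) / 2 ≤ Real.sinh ((x - y) / 2) := Real.self_le_sinh_iff.2 (by linarith)
  have h3 : (x - y) / 2 ≤ Real.sinh ((x + y) / 2) :=
    le_trans (by linarith) (Real.self_le_sinh_iff.2 (by linarith : 0 ≤ (x + y) / 2))
  rw [h1]
  nlinarith [mul_le_mul h3 h2 (by linarith) (by linarith)]

lemma abs_cosh_sub_cosh_ge (x y : ℝ) :
    (|x| - |y|) ^ 2 / 2 ≤ |Real.cosh x - Real.cosh y| := by
  rw [← Real.cosh_abs x, ← Real.cosh_abs y]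
  rcases le_total |y| |x| with h | h
  · exact (cosh_sub_cosh_ge (abs_nonneg y) h).trans (le_abs_self _)
  · rw [abs_sub_comm (Real.cosh _), ← neg_sub |y| |x|, neg_sq]
    exact (cosh_sub_cosh_ge (abs_nonneg x) h).trans (le_abs_self _)

lemma inv_abs_sub_abs_le (x y : ℝ) : (1 + (|x| - |y|) ^ 2)⁻¹ ≤ schurW x y := by
  have h1 : 0 ≤ (1 + (x - y) ^ 2)⁻¹ := by positivity
  have h2 : 0 ≤ (1 + (x + y) ^ 2)⁻¹ := by positivity
  have h : (|x| - |y|) ^ 2 = (x - y) ^ 2 ∨ (|x| - |y|) ^ 2 = (x + y) ^ 2 := by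
    rcases abs_choice x with hx | hx <;> rcases abs_choice y with hy | hy <;> rw [hx, hy]
    · left; ring
    · right; ring
    · right; ring
    · left; ring
  unfold schurW
  rcases h with h | h <;> rw [h] <;> linarith

lemma errorKernel_bound (g : 𝓢(ℝ, ℝ)) {μ : ℝ} (hμ : 0 < μ) :
    ∃ B : ℝ, 0 ≤ B ∧ ∀ x y : ℝ,
      ‖(((Real.cosh x - Real.cosh y) ^ 2 : ℝ) : ℂ) *
        fourierG g (μ * Real.cosh x - μ * Real.cosh y)‖ ≤ B * schurW x y := by
  obtain ⟨C2, h2⟩ := fourierG_decay g 2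
  obtain ⟨C3, h3⟩ := fourierG_decay g 3
  have hC2 : 0 ≤ C2 := le_trans (by positivity) (h2 0)
  have hC3 : 0 ≤ C3 := le_trans (by positivity) (h3 0)
  refine ⟨2 * (C2 / μ ^ 2 + C3 / μ ^ 3), by positivity, fun x y => ?_⟩
  set d := Real.cosh x - Real.cosh y with hd
  have hk : μ * Real.cosh x - μ * Real.cosh y = μ * d := by rw [hd]; ring
  rw [hk, norm_mul, Complex.norm_real, Real.norm_eq_abs, abs_pow]
  set N := ‖fourierG g (μ * d)‖
  have e2 : |d| ^ 2 * N ≤ C2 / μ ^ 2 := by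
    rw [le_div_iff₀ (by positivity)]
    have := h2 (μ * d)
    rw [abs_mul, abs_of_pos hμ, mul_pow] at this
    linarith
  have e3 : |d| ^ 3 * N ≤ C3 / μ ^ 3 := by
    rw [le_div_iff₀ (by positivity)]
    have := h3 (μ * d)
    rw [abs_mul, abs_of_pos hμ, mul_pow] at this
    linarith
  have hdist : (1 + (|x| - |y|) ^ 2) ≤ 2 * (1 + |d|) := by
    have := abs_cosh_sub_cosh_ge x y
    rw [← hd] at this
    linarith
  have hN : 0 ≤ |d| ^ 2 * N := by positivity
  calc |d| ^ 2 * N ≤ 2 * (C2 / μ ^ 2 + C3 / μ ^ 3) * (1 + (|x| - |y|) ^ 2)⁻¹ := by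
        rw [← div_eq_mul_inv, le_div_iff₀ (by positivity)]
        calc |d| ^ 2 * N * (1 + (|x| - |y|) ^ 2) ≤ |d| ^ 2 * N * (2 * (1 + |d|)) := by gcongr
          _ = 2 * (|d| ^ 2 * N + |d| ^ 3 * N) := by ring
          _ ≤ _ := by linarith
    _ ≤ _ := by
        gcongr
        exact inv_abs_sub_abs_le x y

/-! ### The energy inequality -/

lemma kernel_identity (α θ η : ℝ) :
    Real.cosh ((θ + η) / 2) ^ 2 * ((1 - α) + α * Real.cosh (θ - η))
      = (1 - 2 * α) / 2 + (1 + 2 * α) / 2 * (Real.cosh θ * Real.cosh η)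
        + (1 - 2 * α) / 2 * (Real.sinh θ * Real.sinh η)
        + α / 2 * (Real.cosh θ - Real.cosh η) ^ 2 := by
  have h1 : Real.cosh ((θ + η) / 2) ^ 2 = (1 + Real.cosh (θ + η)) / 2 := by
    have h := Real.cosh_two_mul ((θ + η) / 2)
    have h' := Real.cosh_sq ((θ + η) / 2)
    rw [show 2 * ((θ + η) / 2) = θ + η by ring] at h
    linarith
  rw [h1, Real.cosh_add, Real.cosh_sub]
  linear_combination (α / 2 * Real.sinh η ^ 2) * Real.cosh_sq θ
    + (α / 2 * (Real.cosh θ ^ 2 - 1)) * Real.cosh_sq η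

/-- QEI for the free field with the admissible one-parameter family of stress tensors:
`F_P(θ) = (1−α) + α·cosh θ` with `|α| < 1/2` satisfies a one-particle QEI. -/
theorem free_field_family_QEI
    (μ α : ℝ) (hμ : 0 < μ) (hα : |α| < 1 / 2)
    (g : SchwartzMap ℝ ℝ) :
    ∃ cg : ℝ, 0 < cg ∧
      ∀ φ : ℝ → ℂ, ContDiff ℝ (⊤ : ℕ∞) φ → HasCompactSupport φ →
        -(cg * ∫ θ : ℝ, ‖φ θ‖ ^ 2) ≤
          (Qform μ (fun θ : ℝ => (1 - α) + α * Real.cosh θ) (⇑g) φ).re := by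
  obtain ⟨B, hB, hE⟩ := errorKernel_bound g hμ
  obtain ⟨hα1, hα2⟩ := abs_lt.1 hα
  set m : ℝ := μ ^ 2 / (2 * Real.pi) with hm
  have hm0 : 0 ≤ m := by positivity
  refine ⟨m * (|α| / 2 * (2 * Real.pi * B)) + 1, by positivity, fun φ hφs hφc => ?_⟩
  have hφ : Continuous φ := hφs.continuous
  have hGc := fourierG_continuous g
  have hw : Continuous fun θ => μ * Real.cosh θ := by fun_prop
  set K : ℝ × ℝ → ℂ := fun p => fourierG g (μ * Real.cosh p.1 - μ * Real.cosh p.2) with hK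
  have hKc : Continuous K := by fun_prop
  set E : ℝ × ℝ → ℂ := fun p => (((Real.cosh p.1 - Real.cosh p.2) ^ 2 : ℝ) : ℂ) * K p with hEdef
  have hEc : Continuous E := by fun_prop
  set fc : ℝ → ℂ := fun θ => (Real.cosh θ : ℂ) * φ θ with hfc
  set fs : ℝ → ℂ := fun θ => (Real.sinh θ : ℂ) * φ θ with hfs
  have hfcc : Continuous fc := by fun_prop
  have hfsc : Continuous fs := by fun_prop
  have hfck : HasCompactSupport fc := hφc.mul_left
  have hfsk : HasCompactSupport fs := hφc.mul_left
  have i1 := kernel_integrable hKc hφ hφc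
  have i2 := kernel_integrable hKc hfcc hfck
  have i3 := kernel_integrable hKc hfsc hfsk
  have i4 := kernel_integrable hEc hφ hφc
  have p1 := fourierG_posSemidef g hw hφ hφc
  have p2 := fourierG_posSemidef g hw hfcc hfck
  have p3 := fourierG_posSemidef g hw hfsc hfsk
  have p4 := schur_bound hB (fun p => hE p.1 p.2) hφ hφc
  set T1 := ∫ p : ℝ × ℝ, K p * (starRingEnd ℂ) (φ p.1) * φ p.2 ∂(volume.prod volume)
  set T2 := ∫ p : ℝ × ℝ, K p * (starRingEnd ℂ) (fc p.1) * fc p.2 ∂(volume.prod volume)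
  set T3 := ∫ p : ℝ × ℝ, K p * (starRingEnd ℂ) (fs p.1) * fs p.2 ∂(volume.prod volume)
  set T4 := ∫ p : ℝ × ℝ, E p * (starRingEnd ℂ) (φ p.1) * φ p.2 ∂(volume.prod volume)
  have hQ : Qform μ (fun θ : ℝ => (1 - α) + α * Real.cosh θ) (⇑g) φ
      = (m : ℂ) * ((((1 - 2 * α) / 2 : ℝ) : ℂ) * T1 + (((1 + 2 * α) / 2 : ℝ) : ℂ) * T2
        + (((1 - 2 * α) / 2 : ℝ) : ℂ) * T3 + ((α / 2 : ℝ) : ℂ) * T4) := by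
    have j1 := i1.const_mul (((1 - 2 * α) / 2 : ℝ) : ℂ)
    have j2 := i2.const_mul (((1 + 2 * α) / 2 : ℝ) : ℂ)
    have j3 := i3.const_mul (((1 - 2 * α) / 2 : ℝ) : ℂ)
    have j4 := i4.const_mul ((α / 2 : ℝ) : ℂ)
    have hsum : ∀ p : ℝ × ℝ,
        (((Real.cosh ((p.1 + p.2) / 2)) ^ 2 * ((1 - α) + α * Real.cosh (p.1 - p.2)) : ℝ) : ℂ) *
          fourierG g (μ * Real.cosh p.1 - μ * Real.cosh p.2) *
          (starRingEnd ℂ) (φ p.1) * φ p.2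
        = (((1 - 2 * α) / 2 : ℝ) : ℂ) * (K p * (starRingEnd ℂ) (φ p.1) * φ p.2)
          + (((1 + 2 * α) / 2 : ℝ) : ℂ) * (K p * (starRingEnd ℂ) (fc p.1) * fc p.2)
          + (((1 - 2 * α) / 2 : ℝ) : ℂ) * (K p * (starRingEnd ℂ) (fs p.1) * fs p.2)
          + ((α / 2 : ℝ) : ℂ) * (E p * (starRingEnd ℂ) (φ p.1) * φ p.2) := by
      intro p
      rw [kernel_identity]
      simp only [hK, hEdef, hfc, hfs, map_mul, Complex.conj_ofReal]
      push_cast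
      ring
    have hint := ((j1.add j2).add j3).add j4
    unfold Qform
    congr 1
    rw [← integral_const_mul, ← integral_const_mul, ← integral_const_mul, ← integral_const_mul,
      ← integral_add' j1 j2, ← integral_add' (j1.add j2) j3,
      ← integral_add' ((j1.add j2).add j3) j4]
    refine Eq.trans ?_ (integral_prod _ hint).symm
    refine integral_congr_ae (Filter.Eventually.of_forall fun θ => ?_)
    refine integral_congr_ae (Filter.Eventually.of_forall fun η => ?_)
    exact hsum (θ, η)
  have hN : 0 ≤ ∫ θ, ‖φ θ‖ ^ 2 := integral_nonneg fun θ => by positivity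
  rw [hQ, Complex.re_ofReal_mul]
  simp only [Complex.add_re, Complex.re_ofReal_mul]
  set N := ∫ θ, ‖φ θ‖ ^ 2
  have q1 : 0 ≤ (1 - 2 * α) / 2 * T1.re := mul_nonneg (by linarith) p1
  have q2 : 0 ≤ (1 + 2 * α) / 2 * T2.re := mul_nonneg (by linarith) p2
  have q3 : 0 ≤ (1 - 2 * α) / 2 * T3.re := mul_nonneg (by linarith) p3
  have q4 : -(|α| / 2 * (2 * Real.pi * B * N)) ≤ α / 2 * T4.re := by
    have h : |α / 2 * T4.re| ≤ |α| / 2 * (2 * Real.pi * B * N) := by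
      rw [abs_mul, abs_div, abs_two]
      gcongr
      exact (Complex.abs_re_le_norm _).trans p4
    exact (abs_le.1 h).1
  have q := mul_le_mul_of_nonneg_left
    (show -(|α| / 2 * (2 * Real.pi * B * N)) ≤ (1 - 2 * α) / 2 * T1.re + (1 + 2 * α) / 2 * T2.re
      + (1 - 2 * α) / 2 * T3.re + α / 2 * T4.re by linarith) hm0
  refine le_trans ?_ q
  linarith
end
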